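/- Let f(φ) = 2·∑_{n=1}^∞ (-1)^{n-1} φ^{n-1} / (n³ · C(2n,n)) for complex φ with |φ| < 4, and let θ denote the operator (θg)(φ) = φ·g'(φ). Then f satisfies the fourth-order ordinary differential equation (4+φ)·(θ⁴f)(φ) + (10+4φ)·(θ³f)(φ) + (8+6φ)·(θ²f)(φ) + (2+4φ)·(θf)(φ) + φ·f(φ) = 0 for all φ with |φ| < 4. -/

import Mathlib

/-- The power series Π₀(φ) = 2·∑_{n=1}^∞ (-1)^{n-1} φ^{n-1} / (n³ · C(2n,n)). -/
noncomputable def Pi0 : ℂ → ℂ := fun φ =>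
  ∑' n : ℕ, 2 * (-1 : ℂ) ^ n * φ ^ n / (((n : ℂ) + 1) ^ 3 * (Nat.centralBinom (n + 1) : ℂ))

/-- The Euler operator θ = φ·d/dφ. -/
noncomputable def eulerOp (g : ℂ → ℂ) : ℂ → ℂ := fun φ => φ * deriv g φ

theorem hasSum_congr_aux {f g : ℕ → ℂ} {x : ℂ} (h : ∀ n, f n = g n) :
    HasSum f x ↔ HasSum g x := by
  rw [funext h]

/-- `G` is given on the disc of radius 4 by the power series with coefficients `a`. -/
def RepBy (a : ℕ → ℂ) (G : ℂ → ℂ) : Prop :=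
  (∀ r : ℝ, 0 ≤ r → r < 4 → Summable (fun n => ‖a n‖ * r ^ n)) ∧
    ∀ φ : ℂ, ‖φ‖ < 4 → HasSum (fun n => a n * φ ^ n) (G φ)

theorem RepBy.euler {a : ℕ → ℂ} {G : ℂ → ℂ} (h : RepBy a G) :
    RepBy (fun n => (n : ℂ) * a n) (eulerOp G) := by
  obtain ⟨h1, h2⟩ := h
  refine ⟨?_, ?_⟩
  · intro r hr hr4
    set s : ℝ := (r + 4) / 2 with hs
    have hs0 : 0 < s := by rw [hs]; linarith
    have hrs : r < s := by rw [hs]; linarith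
    have hs4 : s < 4 := by rw [hs]; linarith
    have ht := tendsto_self_mul_const_pow_of_lt_one (r := r / s) (by positivity)
      ((div_lt_one hs0).2 hrs)
    obtain ⟨C, hC⟩ := ht.bddAbove_range
    refine Summable.of_nonneg_of_le (fun n => by positivity) (fun n => ?_)
      ((h1 s hs0.le hs4).mul_left C)
    have hn : (n : ℝ) * (r / s) ^ n ≤ C := hC ⟨n, rfl⟩
    have hn2 : (n : ℝ) * r ^ n ≤ C * s ^ n := by
      rw [div_pow, ← mul_div_assoc, div_le_iff₀ (by positivity)] at hn
      exact hn
    rw [norm_mul, Complex.norm_natCast]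
    nlinarith [mul_le_mul_of_nonneg_left hn2 (norm_nonneg (a n))]
  · intro φ hφ
    set s : ℝ := (‖φ‖ + 4) / 2 with hs
    have hs0 : 0 < s := by rw [hs]; linarith [norm_nonneg φ]
    have hrs : ‖φ‖ < s := by rw [hs]; linarith
    have hs4 : s < 4 := by rw [hs]; linarith
    have hd := Complex.hasSum_deriv_of_summable_norm (F := fun n w => a n * w ^ n)
      (U := Metric.ball (0 : ℂ) s) (z := φ) (h1 s hs0.le hs4)
      (fun i => by fun_prop) Metric.isOpen_ball
      (fun i w hw => by
        rw [norm_mul, norm_pow]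
        have : ‖w‖ ≤ s := by simpa using (mem_ball_zero_iff.1 hw).le
        gcongr)
      (by simpa using hrs)
    have hev : (fun w => ∑' n, a n * w ^ n) =ᶠ[nhds φ] G := by
      filter_upwards [Metric.isOpen_ball.mem_nhds
        (show φ ∈ Metric.ball (0 : ℂ) 4 by simpa using hφ)] with w hw
      exact (h2 w (by simpa using hw)).tsum_eq
    rw [hev.deriv_eq] at hd
    have hd2 := hd.mul_left φ
    unfold eulerOp
    refine (hasSum_congr_aux ?_).1 hd2
    intro n
    rcases n with _ | n
    · simp
    · simp
      ring

noncomputable def piCoeff (n : ℕ) : ℂ :=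
  2 * (-1 : ℂ) ^ n / (((n : ℂ) + 1) ^ 3 * (Nat.centralBinom (n + 1) : ℂ))

theorem norm_piCoeff_le (n : ℕ) : ‖piCoeff n‖ ≤ (1 / 4) ^ n := by
  have hb := Nat.four_pow_le_two_mul_self_mul_centralBinom (n + 1) (by omega)
  have hb' : (4 : ℝ) ^ (n + 1) ≤ 2 * (n + 1) * (Nat.centralBinom (n + 1) : ℝ) := by
    exact_mod_cast hb
  have hc : (0 : ℝ) < (Nat.centralBinom (n + 1) : ℝ) := by
    exact_mod_cast Nat.centralBinom_pos (n + 1)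
  have e : ‖(n : ℂ) + 1‖ = (n : ℝ) + 1 := by
    rw [← Nat.cast_succ, Complex.norm_natCast]; push_cast; rfl
  unfold piCoeff
  simp only [norm_div, norm_mul, norm_pow, norm_neg, norm_one, one_pow, e, Complex.norm_natCast,
    Complex.norm_ofNat, mul_one]
  rw [one_div, inv_pow, ← one_div, div_le_div_iff₀ (by positivity) (by positivity)]
  rw [pow_succ] at hb'
  have hn : (0 : ℝ) ≤ n := Nat.cast_nonneg n
  have : 2 * (n + 1) * (Nat.centralBinom (n + 1) : ℝ) ≤
      2 * ((n + 1) ^ 3 * (Nat.centralBinom (n + 1) : ℝ)) := by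
    have : (n : ℝ) + 1 ≤ (n + 1) ^ 3 := le_self_pow₀ (by linarith) (by norm_num)
    nlinarith
  linarith

theorem repBy_Pi0 : RepBy piCoeff Pi0 := by
  have h1 : ∀ r : ℝ, 0 ≤ r → r < 4 → Summable (fun n => ‖piCoeff n‖ * r ^ n) := by
    intro r hr hr4
    refine Summable.of_nonneg_of_le (fun n => by positivity) (fun n => ?_)
      (summable_geometric_of_lt_one (r := r / 4) (by positivity) (by linarith))
    calc ‖piCoeff n‖ * r ^ n ≤ (1 / 4) ^ n * r ^ n := by
          gcongr; exact norm_piCoeff_le n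
      _ = (r / 4) ^ n := by rw [← mul_pow]; congr 1; ring
  refine ⟨h1, fun φ hφ => ?_⟩
  have hs : Summable (fun n => piCoeff n * φ ^ n) :=
    Summable.of_norm (by simpa using h1 ‖φ‖ (norm_nonneg _) hφ)
  have : Pi0 φ = ∑' n, piCoeff n * φ ^ n := by
    unfold Pi0 piCoeff
    exact tsum_congr fun n => by ring
  rw [this]
  exact hs.hasSum

theorem piCoeff_rec (n : ℕ) :
    2 * ((n : ℂ) + 2) ^ 2 * (2 * n + 3) * piCoeff (n + 1) = - ((n : ℂ) + 1) ^ 3 * piCoeff n := by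
  have hb := Nat.succ_mul_centralBinom_succ (n + 1)
  have hb' : ((n : ℂ) + 2) * (Nat.centralBinom (n + 2) : ℂ) =
      2 * (2 * n + 3) * (Nat.centralBinom (n + 1) : ℂ) := by
    have : (((n + 1 + 1) * Nat.centralBinom (n + 1 + 1) : ℕ) : ℂ) =
      ((2 * (2 * (n + 1) + 1) * Nat.centralBinom (n + 1) : ℕ) : ℂ) := by rw [hb]
    push_cast at this
    linear_combination this
  have c1 : (Nat.centralBinom (n + 1) : ℂ) ≠ 0 := by
    exact_mod_cast (Nat.centralBinom_pos (n + 1)).ne'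
  have c2 : (Nat.centralBinom (n + 2) : ℂ) ≠ 0 := by
    exact_mod_cast (Nat.centralBinom_pos (n + 2)).ne'
  have n1 : (n : ℂ) + 1 ≠ 0 := by exact_mod_cast Nat.succ_ne_zero n
  have n2 : (n : ℂ) + 2 ≠ 0 := by exact_mod_cast Nat.succ_ne_zero (n + 1)
  have e : ((n + 1 : ℕ) : ℂ) + 1 = n + 2 := by push_cast; ring
  unfold piCoeff
  rw [e, pow_succ, show n + 1 + 1 = n + 2 from rfl]
  field_simp
  linear_combination (-1 : ℂ) ^ n * hb'

/-- Π₀ satisfies the Picard-Fuchs equation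
(4+φ)θ⁴Π₀ + (10+4φ)θ³Π₀ + (8+6φ)θ²Π₀ + (2+4φ)θΠ₀ + φΠ₀ = 0 on the disc |φ| < 4. -/
theorem Pi0_satisfies_picard_fuchs :
    ∀ φ : ℂ, ‖φ‖ < 4 →
      (4 + φ) * eulerOp (eulerOp (eulerOp (eulerOp Pi0))) φ
        + (10 + 4 * φ) * eulerOp (eulerOp (eulerOp Pi0)) φ
        + (8 + 6 * φ) * eulerOp (eulerOp Pi0) φ
        + (2 + 4 * φ) * eulerOp Pi0 φ
        + φ * Pi0 φ = 0 := by
  intro φ hφ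
  have r0 := repBy_Pi0
  have s0 := r0.2 φ hφ
  have s1 := r0.euler.2 φ hφ
  have s2 := r0.euler.euler.2 φ hφ
  have s3 := r0.euler.euler.euler.2 φ hφ
  have s4 := r0.euler.euler.euler.euler.2 φ hφ
  have A := (((s4.mul_left 4).add (s3.mul_left 10)).add (s2.mul_left 8)).add (s1.mul_left 2)
  have B := (((((s4.add (s3.mul_left 4)).add (s2.mul_left 6)).add (s1.mul_left 4)).add
    s0).mul_left φ).neg
  have A' := (hasSum_nat_add_iff' 1).2 A
  have key := A'.unique ((hasSum_congr_aux ?_).2 B)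
  · simp at key
    linear_combination key
  · intro n
    have h := piCoeff_rec n
    push_cast
    rw [pow_succ]
    linear_combination ((n : ℂ) + 1) * φ ^ n * φ * h
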